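/- Let (α_i)_{i∈ℕ} be an absolutely summable sequence of real numbers and (x_i)_{i∈ℕ} a sequence of real numbers. Define v(p) = (2π)^{-1/2} Σ_{m∈ℕ} α_m e^{−ipx_m} and v_N(p) = (2π)^{-1/2} Σ_{m=1}^N α_m e^{−ipx_m}. Then for every t > 0, sup_{p∈ℝ} ∫_ℝ |φ_t(p,q)| · |v(p−q) − v_N(p−q)| dq converges to 0 as N → ∞. -/

import Mathlib

open MeasureTheory Filter Topology

/-- The first-order Dyson kernel factor:
`φ_t(p,q) = (e^{it(p²−q²)} − 1)/(i(p²−q²))` if `p² ≠ q²`, and `t` otherwise. -/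
noncomputable def phiK (t p q : ℝ) : ℂ :=
  if p ^ 2 = q ^ 2 then (t : ℂ)
  else (Complex.exp (Complex.I * t * ((p : ℂ) ^ 2 - (q : ℂ) ^ 2)) - 1) /
    (Complex.I * ((p : ℂ) ^ 2 - (q : ℂ) ^ 2))

/-- Fourier transform of `Σ_{i=1}^∞ α_i δ(· − x_i)` with `ℓ¹` couplings. -/
noncomputable def countableFT (α : ℕ → ℝ) (x : ℕ → ℝ) (p : ℝ) : ℂ :=
  ((Real.sqrt (2 * Real.pi) : ℝ) : ℂ)⁻¹ *
    ∑' m : ℕ, (α m : ℂ) * Complex.exp (-Complex.I * p * x m)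

/-- Fourier transform of the truncation to the first `N` centers. -/
noncomputable def truncatedFT (α : ℕ → ℝ) (x : ℕ → ℝ) (N : ℕ) (p : ℝ) : ℂ :=
  ((Real.sqrt (2 * Real.pi) : ℝ) : ℂ)⁻¹ *
    ∑ m ∈ Finset.range N, (α m : ℂ) * Complex.exp (-Complex.I * p * x m)

/-!
The kernel `φ_t(p, ·)` is bounded by `|t|` and, off the resonance `q² = p²`, by `2 / |p² − q²|`.
Since `|p² − q²| = |q − p| |q + p|` is at least the smaller of `(q − p)²` and `(q + p)²`, it is
dominated by two Lorentzians centred at `±p`, whose total mass is independent of `p`. On the other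
hand `|v − v_N|` is at most a multiple of the tail `∑_{m ≥ N} |α_m|`, uniformly in its argument.
-/

theorem min_sub_sq_add_sq_le_abs_sq_sub_sq {R : Type*} [CommRing R] [LinearOrder R]
    [IsStrictOrderedRing R] (a b : R) :
    min ((b - a) ^ 2) ((b + a) ^ 2) ≤ |a ^ 2 - b ^ 2| := by
  rw [abs_sub_comm, sq_sub_sq, abs_mul, ← sq_abs (b - a), ← sq_abs (b + a), sq, sq]
  rcases le_total |b - a| |b + a| with h | h
  · exact min_le_of_left_le (mul_le_mul_of_nonneg_right h (abs_nonneg _))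
  · exact min_le_of_right_le (mul_le_mul_of_nonneg_left h (abs_nonneg _))

theorem lintegral_inv_one_add_add_sq (a : ℝ) :
    ∫⁻ x : ℝ, ENNReal.ofReal (1 + (x + a) ^ 2)⁻¹ = ENNReal.ofReal Real.pi := by
  rw [lintegral_add_right_eq_self (fun x : ℝ => ENNReal.ofReal (1 + x ^ 2)⁻¹) a,
    ← ofReal_integral_eq_lintegral_ofReal integrable_inv_one_add_sq
      (ae_of_all _ fun x => by positivity),
    integral_univ_inv_one_add_sq]

section Kernel

variable (t p q : ℝ)

theorem norm_phiK_of_sq_ne_sq {p q : ℝ} (h : p ^ 2 ≠ q ^ 2) :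
    ‖phiK t p q‖ =
      ‖Complex.exp (Complex.I * (t * (p ^ 2 - q ^ 2) : ℝ)) - 1‖ / |p ^ 2 - q ^ 2| := by
  have hphase : Complex.I * t * ((p : ℂ) ^ 2 - (q : ℂ) ^ 2)
      = Complex.I * (t * (p ^ 2 - q ^ 2) : ℝ) := by
    push_cast
    ring
  have hdenom : ‖Complex.I * ((p : ℂ) ^ 2 - (q : ℂ) ^ 2)‖ = |p ^ 2 - q ^ 2| := by
    rw [norm_mul, Complex.norm_I, one_mul, ← Real.norm_eq_abs, ← Complex.norm_real]
    push_cast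
    rfl
  rw [phiK, if_neg h, norm_div, hphase, hdenom]

theorem norm_phiK_le_abs : ‖phiK t p q‖ ≤ |t| := by
  by_cases h : p ^ 2 = q ^ 2
  · rw [phiK, if_pos h, Complex.norm_real, Real.norm_eq_abs]
  · rw [norm_phiK_of_sq_ne_sq t h, div_le_iff₀ (abs_sub_pos.mpr h), ← abs_mul]
    exact Real.norm_exp_I_mul_ofReal_sub_one_le

theorem norm_phiK_mul_abs_sq_sub_sq_le : ‖phiK t p q‖ * |p ^ 2 - q ^ 2| ≤ 2 := by
  by_cases h : p ^ 2 = q ^ 2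
  · simp [h]
  · rw [norm_phiK_of_sq_ne_sq t h, div_mul_cancel₀ _ (abs_sub_pos.mpr h).ne']
    calc ‖Complex.exp (Complex.I * (t * (p ^ 2 - q ^ 2) : ℝ)) - 1‖
        ≤ ‖Complex.exp (Complex.I * (t * (p ^ 2 - q ^ 2) : ℝ))‖ + ‖(1 : ℂ)‖ := norm_sub_le _ _
      _ = 2 := by rw [Complex.norm_exp_I_mul_ofReal, norm_one, one_add_one_eq_two]

theorem norm_phiK_le_inv_one_add_sq :
    ‖phiK t p q‖ ≤ (|t| + 2) * ((1 + (q - p) ^ 2)⁻¹ + (1 + (q + p) ^ 2)⁻¹) := by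
  have hsum : ‖phiK t p q‖ * (1 + |p ^ 2 - q ^ 2|) ≤ |t| + 2 := by
    rw [mul_add, mul_one]
    exact add_le_add (norm_phiK_le_abs t p q) (norm_phiK_mul_abs_sq_sub_sq_le t p q)
  have hlorentz {d : ℝ} (hd : d ^ 2 ≤ |p ^ 2 - q ^ 2|) :
      ‖phiK t p q‖ ≤ (|t| + 2) * (1 + d ^ 2)⁻¹ := by
    rw [← div_eq_mul_inv, le_div_iff₀ (by positivity)]
    exact le_trans (by gcongr) hsum
  rcases min_le_iff.mp (min_sub_sq_add_sq_le_abs_sq_sub_sq p q) with h | h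
  · refine (hlorentz h).trans (mul_le_mul_of_nonneg_left ?_ (by positivity))
    exact le_add_of_nonneg_right (by positivity)
  · refine (hlorentz h).trans (mul_le_mul_of_nonneg_left ?_ (by positivity))
    exact le_add_of_nonneg_left (by positivity)

theorem lintegral_enorm_phiK_le :
    ∫⁻ q : ℝ, ‖phiK t p q‖ₑ ≤ ENNReal.ofReal ((|t| + 2) * (2 * Real.pi)) := by
  calc ∫⁻ q : ℝ, ‖phiK t p q‖ₑ
      ≤ ∫⁻ q : ℝ, ENNReal.ofReal (|t| + 2) *
          (ENNReal.ofReal (1 + (q + -p) ^ 2)⁻¹ + ENNReal.ofReal (1 + (q + p) ^ 2)⁻¹) := by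
        refine lintegral_mono fun q => ?_
        rw [← ENNReal.ofReal_add (by positivity) (by positivity),
          ← ENNReal.ofReal_mul (by positivity), ← sub_eq_add_neg, ← ofReal_norm]
        exact ENNReal.ofReal_le_ofReal (norm_phiK_le_inv_one_add_sq t p q)
    _ = ENNReal.ofReal (|t| + 2) * (ENNReal.ofReal Real.pi + ENNReal.ofReal Real.pi) := by
        rw [lintegral_const_mul' _ _ ENNReal.ofReal_ne_top, lintegral_add_left (by fun_prop),
          lintegral_inv_one_add_add_sq, lintegral_inv_one_add_add_sq]
    _ = ENNReal.ofReal ((|t| + 2) * (2 * Real.pi)) := by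
        rw [← ENNReal.ofReal_add Real.pi_pos.le Real.pi_pos.le, ← two_mul,
          ← ENNReal.ofReal_mul (by positivity)]

theorem lintegral_enorm_phiK_mul_enorm_le {E : Type*} [SeminormedAddGroup E] {w : ℝ → E}
    {c : ℝ} (hw : ∀ q, ‖w q‖ ≤ c) :
    ∫⁻ q : ℝ, ‖phiK t p q‖ₑ * ‖w q‖ₑ ≤
      ENNReal.ofReal ((|t| + 2) * (2 * Real.pi)) * ENNReal.ofReal c := by
  calc ∫⁻ q : ℝ, ‖phiK t p q‖ₑ * ‖w q‖ₑ
      ≤ ∫⁻ q : ℝ, ‖phiK t p q‖ₑ * ENNReal.ofReal c := by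
        gcongr with q
        rw [← ofReal_norm]
        exact ENNReal.ofReal_le_ofReal (hw q)
    _ = (∫⁻ q : ℝ, ‖phiK t p q‖ₑ) * ENNReal.ofReal c :=
        lintegral_mul_const' _ _ ENNReal.ofReal_ne_top
    _ ≤ ENNReal.ofReal ((|t| + 2) * (2 * Real.pi)) * ENNReal.ofReal c := by
        gcongr
        exact lintegral_enorm_phiK_le t p

end Kernel

theorem norm_tsum_sub_sum_range_le {E : Type*} [NormedAddCommGroup E] [CompleteSpace E]
    {f : ℕ → E} (hf : Summable fun m => ‖f m‖) (N : ℕ) :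
    ‖∑' m, f m - ∑ m ∈ Finset.range N, f m‖ ≤ ∑' m, ‖f (m + N)‖ := by
  rw [← hf.of_norm.sum_add_tsum_nat_add N, add_sub_cancel_left]
  exact norm_tsum_le_tsum_norm ((summable_nat_add_iff N).mpr hf)

theorem norm_ofReal_mul_exp_neg_I_mul (a p y : ℝ) :
    ‖(a : ℂ) * Complex.exp (-Complex.I * p * y)‖ = |a| := by
  have hphase : -Complex.I * p * y = Complex.I * (-(p * y) : ℝ) := by
    push_cast
    ring
  rw [norm_mul, hphase, Complex.norm_exp_I_mul_ofReal, mul_one, Complex.norm_real,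
    Real.norm_eq_abs]

theorem norm_countableFT_sub_truncatedFT_le {α : ℕ → ℝ} (hα : Summable fun i => |α i|)
    (x : ℕ → ℝ) (N : ℕ) (p : ℝ) :
    ‖countableFT α x p - truncatedFT α x N p‖ ≤
      (Real.sqrt (2 * Real.pi))⁻¹ * ∑' m, |α (m + N)| := by
  rw [countableFT, truncatedFT, ← mul_sub, norm_mul, norm_inv, Complex.norm_real,
    Real.norm_of_nonneg (Real.sqrt_nonneg _)]
  gcongr
  simpa only [norm_ofReal_mul_exp_neg_I_mul] using
    norm_tsum_sub_sum_range_le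
      (f := fun m => (α m : ℂ) * Complex.exp (-Complex.I * p * x m))
      (by simpa only [norm_ofReal_mul_exp_neg_I_mul] using hα) N

theorem countable_centers_first_kernel_tendsto_general {α : ℕ → ℝ}
    (hα : Summable fun i => |α i|) (x : ℕ → ℝ) (t : ℝ) :
    Tendsto
      (fun N : ℕ => ⨆ p : ℝ, ∫⁻ q : ℝ, ‖phiK t p q‖ₑ *
        ‖countableFT α x (p - q) - truncatedFT α x N (p - q)‖ₑ)
      atTop (𝓝 0) := by
  have hbound (N : ℕ) : (⨆ p : ℝ, ∫⁻ q : ℝ, ‖phiK t p q‖ₑ *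
        ‖countableFT α x (p - q) - truncatedFT α x N (p - q)‖ₑ) ≤
      ENNReal.ofReal ((|t| + 2) * (2 * Real.pi)) *
        ENNReal.ofReal ((Real.sqrt (2 * Real.pi))⁻¹ * ∑' m, |α (m + N)|) :=
    iSup_le fun p => lintegral_enorm_phiK_mul_enorm_le t p fun q =>
      norm_countableFT_sub_truncatedFT_le hα x N (p - q)
  have htail : Tendsto (fun N => (Real.sqrt (2 * Real.pi))⁻¹ * ∑' m, |α (m + N)|)
      atTop (𝓝 0) := by
    simpa only [mul_zero] using
      (tendsto_sum_nat_add fun i => |α i|).const_mul (Real.sqrt (2 * Real.pi))⁻¹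
  refine tendsto_of_tendsto_of_tendsto_of_le_of_le tendsto_const_nhds ?_ (fun _ => zero_le) hbound
  simpa only [ENNReal.ofReal_zero, mul_zero] using
    ENNReal.Tendsto.const_mul (ENNReal.tendsto_ofReal htail) (Or.inr ENNReal.ofReal_ne_top)

/-- First-order kernel estimate behind Theorem 3.4 (countably many centers): for every
`t > 0`, `sup_p ∫ |φ_t(p,q)| · |v(p−q) − v_N(p−q)| dq → 0` as `N → ∞`. -/
theorem countable_centers_first_kernel_tendsto (α : ℕ → ℝ)
    (hα : Summable fun i => |α i|) (x : ℕ → ℝ) :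
    ∀ t : ℝ, 0 < t → Tendsto
      (fun N : ℕ => ⨆ p : ℝ, ∫⁻ q : ℝ, (‖phiK t p q‖₊ : ENNReal) *
        (‖countableFT α x (p - q) - truncatedFT α x N (p - q)‖₊ : ENNReal))
      atTop (𝓝 0) :=
  fun t _ => countable_centers_first_kernel_tendsto_general hα x t
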